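/- Let n ≥ 2, let D be a digital n-object, and let e be a free (n−2)-cell of D that is not an (n−2)-hub of D (an (n−2)-nub). Then b_{n−1}(e, D) = 2, i.e. exactly 2 free (n−1)-cells of D are bounded by e. -/

import Mathlib

/-!
An `(n-2)`-cell `e` has exactly two even coordinates `a` and `b`. The voxels of its block are
obtained by moving both of these by `±1`, and the `(n-1)`-cells bounded by `e` by moving one of
them. Arranged cyclically around `e`, these four `(n-1)`-cells separate consecutive voxels of the
block, and such a cell is free exactly when one of the two voxels it separates lies in `D` and the
other does not. So `b_{n-1}(e, D)` is the number of color changes along a `2`-colored `4`-cycle,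
which is `2` unless the coloring is constant or alternating. A constant coloring contradicts
freeness of `e`, and an alternating one makes `e` a hub.
-/

namespace DigitalGeometry

/-- The dimension of a cell of the cubical grid (doubled coordinates):
the number of odd coordinates. -/
def cdim {n : ℕ} (c : Fin n → ℤ) : ℕ :=
  (Finset.univ.filter fun j => Odd (c j)).card

/-- The bounding relation `e < f` between cells of the grid. -/
def Bounds {n : ℕ} (e f : Fin n → ℤ) : Prop :=
  cdim e < cdim f ∧ ∀ j, e j = f j ∨ (Odd (f j) ∧ |e j - f j| = 1)

/-- A voxel is an `n`-cell: all coordinates odd. -/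
def IsVoxel {n : ℕ} (v : Fin n → ℤ) : Prop := ∀ j, Odd (v j)

/-- The `i`-block centered on an `i`-cell `e`: all voxels bounded by `e`. -/
def Block {n : ℕ} (e : Fin n → ℤ) : Set (Fin n → ℤ) :=
  {v | IsVoxel v ∧ Bounds e v}

/-- `Cells D i` : the `i`-cells of the object `D` (for `i < n` those bounding
some voxel of `D`; for `i = n` it is `D` itself). -/
def Cells {n : ℕ} (D : Set (Fin n → ℤ)) (i : ℕ) : Set (Fin n → ℤ) :=
  {e | cdim e = i ∧ (e ∈ D ∨ ∃ v ∈ D, Bounds e v)}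

/-- `c_i(D)` : the number of `i`-cells of `D`. -/
noncomputable def cCount {n : ℕ} (D : Set (Fin n → ℤ)) (i : ℕ) : ℕ := (Cells D i).ncard

/-- The free `i`-cells of `D`: those whose `i`-block is not contained in `D`. -/
def FreeCells {n : ℕ} (D : Set (Fin n → ℤ)) (i : ℕ) : Set (Fin n → ℤ) :=
  {e | e ∈ Cells D i ∧ ¬ Block e ⊆ D}

/-- `c*_i(D)` : the number of free `i`-cells of `D`. -/
noncomputable def cStar {n : ℕ} (D : Set (Fin n → ℤ)) (i : ℕ) : ℕ := (FreeCells D i).ncard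

/-- The non-free `i`-cells of `D`. -/
def NonFreeCells {n : ℕ} (D : Set (Fin n → ℤ)) (i : ℕ) : Set (Fin n → ℤ) :=
  {e | e ∈ Cells D i ∧ Block e ⊆ D}

/-- `c'_i(D)` : the number of non-free `i`-cells of `D`. -/
noncomputable def cPrime {n : ℕ} (D : Set (Fin n → ℤ)) (i : ℕ) : ℕ := (NonFreeCells D i).ncard

/-- `InterCell v1 v2 e` : the intersection of the voxels `v1`, `v2`
(as subsets of `ℝ^n`) equals the cell `e`. -/
def InterCell {n : ℕ} (v1 v2 e : Fin n → ℤ) : Prop :=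
  ∀ j, (v1 j = v2 j ∧ e j = v1 j) ∨
       (e j + 1 = max (v1 j) (v2 j) ∧ e j - 1 = min (v1 j) (v2 j))

/-- `e` is an `(n-2)`-hub of `D`, i.e. `D` has an `(n-2)`-gap over `e`. -/
def IsHub {n : ℕ} (D : Set (Fin n → ℤ)) (e : Fin n → ℤ) : Prop :=
  cdim e = n - 2 ∧ ∃ v1 v2 : Fin n → ℤ, v1 ≠ v2 ∧
    Block e ∩ D = {v1, v2} ∧ InterCell v1 v2 e

/-- `g_{n-2}(D)` : the number of `(n-2)`-gaps of `D`. -/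
noncomputable def gapCount {n : ℕ} (D : Set (Fin n → ℤ)) : ℕ := {e | IsHub D e}.ncard

/-- `b_j(e, D)` : the number of free `j`-cells of `D` bounded by `e`. -/
noncomputable def bcount {n : ℕ} (e : Fin n → ℤ) (D : Set (Fin n → ℤ)) (j : ℕ) : ℕ :=
  {f | f ∈ FreeCells D j ∧ Bounds e f}.ncard

/-- Two voxels are `i`-adjacent if they are distinct and their intersection
contains an `i`-cell. -/
def Adj {n : ℕ} (i : ℕ) (v1 v2 : Fin n → ℤ) : Prop :=
  v1 ≠ v2 ∧ ∃ e : Fin n → ℤ, cdim e = i ∧ Bounds e v1 ∧ Bounds e v2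

open Function

section Cofaces

variable {n : ℕ} {e f g : Fin n → ℤ} {i j : Fin n} {s t : ℤˣ}

/-- The directions in which the cell `c` is degenerate, i.e. a single point. -/
def evenCoords (c : Fin n → ℤ) : Finset (Fin n) :=
  Finset.univ.filter fun j => Even (c j)

/-- The cell obtained from `e` by extending it in direction `j` towards the side given by the sign
`s`. It has `e` as a facet when `e j` is even; for odd `e j` it is of no geometric interest. -/
def coface (e : Fin n → ℤ) (j : Fin n) (s : ℤˣ) : Fin n → ℤ :=
  update e j (e j + s)

lemma mem_evenCoords : j ∈ evenCoords e ↔ Even (e j) := by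
  simp [evenCoords]

lemma cdim_add_card_evenCoords (e : Fin n → ℤ) : cdim e + (evenCoords e).card = n := by
  simpa [cdim, evenCoords] using Finset.card_filter_add_card_filter_not
    (s := (Finset.univ : Finset (Fin n))) (fun j => Odd (e j))

lemma IsVoxel.cdim_eq (hf : IsVoxel f) : cdim f = n := by
  simp [cdim, Finset.filter_true_of_mem fun j _ => hf j]

lemma isVoxel_iff_evenCoords_eq_empty : IsVoxel f ↔ evenCoords f = ∅ := by
  simp [IsVoxel, evenCoords, Finset.filter_eq_empty_iff]

lemma coface_self (e : Fin n → ℤ) (j : Fin n) (s : ℤˣ) : coface e j s j = e j + s :=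
  update_self ..

lemma coface_of_ne (h : i ≠ j) (e : Fin n → ℤ) (s : ℤˣ) : coface e j s i = e i :=
  update_of_ne h ..

lemma coface_comm (h : i ≠ j) (e : Fin n → ℤ) (s t : ℤˣ) :
    coface (coface e i s) j t = coface (coface e j t) i s := by
  simp only [coface, update_of_ne h, update_of_ne h.symm, update_comm h]

lemma eq_coface_iff : f = coface e j s ↔ f j = e j + s ∧ ∀ i, i ≠ j → f i = e i :=
  eq_update_iff

lemma coface_inj : coface e i s = coface e j t ↔ i = j ∧ s = t := by
  refine ⟨fun h => ?_, by rintro ⟨rfl, rfl⟩; rfl⟩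
  obtain rfl : i = j := by
    by_contra hij
    have hi := congrFun h i
    rw [coface_self, coface_of_ne hij, add_eq_left] at hi
    exact s.ne_zero hi
  have hi := congrFun h i
  rw [coface_self, coface_self, add_right_inj, Units.val_inj] at hi
  exact ⟨rfl, hi⟩

lemma odd_add_unit {x : ℤ} (hx : Even x) (s : ℤˣ) : Odd (x + s) := by
  rcases Int.units_eq_one_or s with rfl | rfl
  exacts [hx.add_one, hx.sub_odd odd_one]

lemma evenCoords_coface (hj : j ∈ evenCoords e) (s : ℤˣ) :
    evenCoords (coface e j s) = (evenCoords e).erase j := by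
  ext i
  rw [Finset.mem_erase, mem_evenCoords, mem_evenCoords]
  rcases eq_or_ne i j with rfl | hij
  · simpa [coface_self] using odd_add_unit (mem_evenCoords.1 hj) s
  · simp [coface_of_ne hij, hij]

lemma cdim_coface (hj : j ∈ evenCoords e) (s : ℤˣ) : cdim (coface e j s) = cdim e + 1 := by
  have he := cdim_add_card_evenCoords e
  have hc := cdim_add_card_evenCoords (coface e j s)
  have hcard := Finset.card_erase_add_one hj
  rw [evenCoords_coface hj] at hc
  omega

lemma exists_eq_add_unit_iff {x y : ℤ} : (∃ s : ℤˣ, y = x + s) ↔ |x - y| = 1 := by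
  rw [abs_eq zero_le_one]
  constructor
  · rintro ⟨s, rfl⟩
    rcases Int.units_eq_one_or s with rfl | rfl <;> simp
  · rintro (h | h)
    exacts [⟨-1, by push_cast; omega⟩, ⟨1, by push_cast; omega⟩]

lemma bounds_coface (hj : j ∈ evenCoords e) (s : ℤˣ) : Bounds e (coface e j s) := by
  refine ⟨by rw [cdim_coface hj]; exact Nat.lt_succ_self _, fun i => ?_⟩
  rcases eq_or_ne i j with rfl | hij
  · rw [coface_self]
    exact Or.inr ⟨odd_add_unit (mem_evenCoords.1 hj) s, exists_eq_add_unit_iff.1 ⟨s, rfl⟩⟩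
  · exact Or.inl (coface_of_ne hij e s).symm

lemma Bounds.trans (hef : Bounds e f) (hfg : Bounds f g) : Bounds e g := by
  refine ⟨hef.1.trans hfg.1, fun j => ?_⟩
  rcases hfg.2 j with h | ⟨hg, h⟩
  · rw [← h]
    exact hef.2 j
  · have hf : ¬ Odd (f j) := by
      rw [abs_eq zero_le_one] at h
      simp only [Int.odd_iff] at hg ⊢
      omega
    have he : e j = f j := (hef.2 j).resolve_right fun h => hf h.1
    exact Or.inr ⟨hg, he ▸ h⟩

lemma Bounds.evenCoords_subset (h : Bounds e f) : evenCoords f ⊆ evenCoords e := by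
  intro j hj
  rw [mem_evenCoords] at hj ⊢
  rcases h.2 j with h | h
  · rwa [h]
  · exact absurd h.1 (Int.not_odd_iff_even.2 hj)

lemma Bounds.apply_eq (h : Bounds e f) (hj : j ∈ evenCoords e → j ∈ evenCoords f) :
    f j = e j := by
  rcases h.2 j with h | ⟨hf, h⟩
  · exact h.symm
  · rw [abs_eq zero_le_one] at h
    simp only [mem_evenCoords, Int.even_iff, Int.odd_iff] at hj hf
    omega

lemma Bounds.exists_apply_eq_add (h : Bounds e f) (he : j ∈ evenCoords e)
    (hf : j ∉ evenCoords f) : ∃ s : ℤˣ, f j = e j + s := by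
  rcases h.2 j with h | h
  · rw [mem_evenCoords] at he hf
    exact absurd (h ▸ he) hf
  · exact exists_eq_add_unit_iff.2 h.2

lemma bounds_and_cdim_eq_succ_iff :
    Bounds e f ∧ cdim f = cdim e + 1 ↔ ∃ j ∈ evenCoords e, ∃ s, f = coface e j s := by
  refine ⟨fun ⟨h, hd⟩ => ?_, ?_⟩
  · have hcard : (evenCoords e \ evenCoords f).card = 1 := by
      have he := cdim_add_card_evenCoords e
      have hf := cdim_add_card_evenCoords f
      rw [hd] at hf
      rw [Finset.card_sdiff_of_subset h.evenCoords_subset]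
      omega
    obtain ⟨j, hj⟩ := Finset.card_eq_one.1 hcard
    have hmem : ∀ i, i ∈ evenCoords e ∧ i ∉ evenCoords f ↔ i = j := fun i => by
      rw [← Finset.mem_sdiff, hj, Finset.mem_singleton]
    obtain ⟨hje, hjf⟩ := (hmem j).2 rfl
    obtain ⟨s, hs⟩ := h.exists_apply_eq_add hje hjf
    refine ⟨j, hje, s, eq_coface_iff.2 ⟨hs, fun i hij => h.apply_eq fun hie => ?_⟩⟩
    exact not_not.1 fun hif => hij ((hmem i).1 ⟨hie, hif⟩)
  · rintro ⟨j, hj, s, rfl⟩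
    exact ⟨bounds_coface hj s, cdim_coface hj s⟩

lemma Bounds.coface_left (h : Bounds e f) (hd : cdim e + 1 < cdim f) (he : j ∈ evenCoords e)
    (hs : f j = e j + s) : Bounds (coface e j s) f := by
  refine ⟨by rwa [cdim_coface he], fun i => ?_⟩
  rcases eq_or_ne i j with rfl | hij
  · exact Or.inl (by rw [coface_self, hs])
  · rw [coface_of_ne hij]
    exact h.2 i

end Cofaces

section Blocks

variable {n : ℕ} {D : Set (Fin n → ℤ)} {e f v : Fin n → ℤ} {a b c : Fin n}

lemma mem_block_iff_exists_mem_block_coface (hd : cdim e + 1 < n) (ha : a ∈ evenCoords e) :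
    v ∈ Block e ↔ ∃ s, v ∈ Block (coface e a s) := by
  constructor
  · rintro ⟨hv, h⟩
    have hav : a ∉ evenCoords v := by simp [isVoxel_iff_evenCoords_eq_empty.1 hv]
    obtain ⟨s, hs⟩ := h.exists_apply_eq_add ha hav
    exact ⟨s, hv, h.coface_left (hv.cdim_eq.symm ▸ hd) ha hs⟩
  · rintro ⟨s, hv, h⟩
    exact ⟨hv, (bounds_coface ha s).trans h⟩

lemma mem_block_iff_of_evenCoords_eq_singleton (hf : evenCoords f = {c}) :
    v ∈ Block f ↔ ∃ s, v = coface f c s := by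
  have hd : cdim f + 1 = n := by simpa [hf] using cdim_add_card_evenCoords f
  have hvox : IsVoxel v ↔ cdim v = cdim f + 1 := by
    rw [isVoxel_iff_evenCoords_eq_empty, ← Finset.card_eq_zero, hd]
    have hv := cdim_add_card_evenCoords v
    omega
  calc v ∈ Block f ↔ Bounds f v ∧ cdim v = cdim f + 1 := by rw [← hvox]; exact and_comm
    _ ↔ ∃ s, v = coface f c s := by simp [bounds_and_cdim_eq_succ_iff, hf]

lemma evenCoords_coface_of_eq_pair (hab : a ≠ b) (he : evenCoords e = {a, b}) (s : ℤˣ) :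
    evenCoords (coface e a s) = {b} := by
  rw [evenCoords_coface (by simp [he]), he, Finset.erase_insert (by simpa using hab)]

lemma mem_block_iff_of_evenCoords_eq_pair (hab : a ≠ b) (he : evenCoords e = {a, b}) :
    v ∈ Block e ↔ ∃ s t, v = coface (coface e a s) b t := by
  have hd : cdim e + 2 = n := by
    simpa [he, Finset.card_pair hab] using cdim_add_card_evenCoords e
  simp only [mem_block_iff_exists_mem_block_coface (by omega) (by simp [he] : a ∈ evenCoords e),
    mem_block_iff_of_evenCoords_eq_singleton (evenCoords_coface_of_eq_pair hab he _)]

lemma mem_freeCells_cdim_iff (hD : ∀ v ∈ D, IsVoxel v) (he : cdim e < n) :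
    e ∈ FreeCells D (cdim e) ↔ (∃ v ∈ Block e, v ∈ D) ∧ ∃ v ∈ Block e, v ∉ D := by
  have heD : e ∉ D := fun h => he.ne (hD e h).cdim_eq
  have hcell : (∃ v ∈ D, Bounds e v) ↔ ∃ v ∈ Block e, v ∈ D :=
    exists_congr fun v => ⟨fun ⟨hv, h⟩ => ⟨⟨hD v hv, h⟩, hv⟩, fun ⟨h, hv⟩ => ⟨hv, h.2⟩⟩
  simp only [FreeCells, Cells, Set.mem_ofPred_eq, true_and, heD, false_or, hcell, Set.not_subset]

lemma mem_freeCells_iff_of_evenCoords_eq_singleton (hD : ∀ v ∈ D, IsVoxel v)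
    (hf : evenCoords f = {c}) :
    f ∈ FreeCells D (cdim f) ↔ ¬ (coface f c 1 ∈ D ↔ coface f c (-1) ∈ D) := by
  have hd : cdim f + 1 = n := by simpa [hf] using cdim_add_card_evenCoords f
  have hsign (p : ℤˣ → Prop) : (∃ s, p s) ↔ p 1 ∨ p (-1) := by
    refine ⟨fun ⟨s, hs⟩ => ?_, fun h => h.elim (⟨_, ·⟩) (⟨_, ·⟩)⟩
    rcases Int.units_eq_one_or s with rfl | rfl
    exacts [Or.inl hs, Or.inr hs]
  have hblock (p : (Fin n → ℤ) → Prop) :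
      (∃ v ∈ Block f, p v) ↔ p (coface f c 1) ∨ p (coface f c (-1)) := by
    simp only [mem_block_iff_of_evenCoords_eq_singleton hf, ← hsign fun s => p (coface f c s)]
    exact ⟨fun ⟨_, ⟨s, hs⟩, hp⟩ => ⟨s, hs ▸ hp⟩, fun ⟨s, hp⟩ => ⟨_, ⟨s, rfl⟩, hp⟩⟩
  rw [mem_freeCells_cdim_iff hD (by omega), hblock, hblock]
  tauto

lemma bcount_cdim_add_one (e : Fin n → ℤ) (D : Set (Fin n → ℤ)) :
    bcount e D (cdim e + 1) =
      ∑ j ∈ evenCoords e, {s | coface e j s ∈ FreeCells D (cdim e + 1)}.ncard := by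
  classical
  let freeSigns (j : Fin n) : Finset ℤˣ :=
    Finset.univ.filter fun s => coface e j s ∈ FreeCells D (cdim e + 1)
  have himage : {f | f ∈ FreeCells D (cdim e + 1) ∧ Bounds e f} =
      ((evenCoords e).sigma freeSigns).image fun p => coface e p.1 p.2 := by
    ext f
    have hcoface := bounds_and_cdim_eq_succ_iff (e := e) (f := f)
    simp only [Finset.coe_image, Set.mem_image, Finset.mem_coe, Finset.mem_sigma, Sigma.exists,
      freeSigns, Finset.mem_filter, Finset.mem_univ, true_and, Set.mem_ofPred_eq]
    constructor
    · rintro ⟨hf, h⟩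
      obtain ⟨j, hj, s, rfl⟩ := hcoface.1 ⟨h, hf.1.1⟩
      exact ⟨j, s, ⟨hj, hf⟩, rfl⟩
    · rintro ⟨j, s, ⟨hj, hf⟩, rfl⟩
      exact ⟨hf, bounds_coface hj s⟩
  have hinj : Injective fun p : (_ : Fin n) × ℤˣ => coface e p.1 p.2 := by
    rintro ⟨i, s⟩ ⟨j, t⟩ h
    obtain ⟨rfl, rfl⟩ := coface_inj.1 h
    rfl
  rw [bcount, himage, Set.ncard_coe_finset, Finset.card_image_of_injective _ hinj,
    Finset.card_sigma]
  refine Finset.sum_congr rfl fun j _ => ?_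
  rw [← Set.ncard_coe_finset, Finset.coe_filter_univ]

lemma bcount_of_evenCoords_eq_pair (hD : ∀ v ∈ D, IsVoxel v) (hab : a ≠ b)
    (he : evenCoords e = {a, b}) :
    bcount e D (cdim e + 1) =
      {s | ¬ (coface (coface e a s) b 1 ∈ D ↔ coface (coface e a s) b (-1) ∈ D)}.ncard +
      {t | ¬ (coface (coface e a 1) b t ∈ D ↔ coface (coface e a (-1)) b t ∈ D)}.ncard := by
  have hfree {x y : Fin n} (hxy : x ≠ y) (hx : evenCoords e = {x, y}) (s : ℤˣ) :
      coface e x s ∈ FreeCells D (cdim e + 1) ↔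
        ¬ (coface (coface e x s) y 1 ∈ D ↔ coface (coface e x s) y (-1) ∈ D) := by
    rw [← mem_freeCells_iff_of_evenCoords_eq_singleton hD (evenCoords_coface_of_eq_pair hxy hx s),
      cdim_coface (by simp [hx])]
  rw [bcount_cdim_add_one, he, Finset.sum_pair hab]
  simp only [hfree hab he, hfree hab.symm (he.trans (Finset.pair_comm a b)),
    coface_comm hab.symm]

lemma interCell_coface_coface_neg (hab : a ≠ b) (e : Fin n → ℤ) (s t : ℤˣ) :
    InterCell (coface (coface e a s) b t) (coface (coface e a (-s)) b (-t)) e := by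
  have hsides (x : ℤ) (u : ℤˣ) :
      x + 1 = max (x + u) (x + (-u : ℤˣ)) ∧ x - 1 = min (x + u) (x + (-u : ℤˣ)) := by
    rcases Int.units_eq_one_or u with rfl | rfl <;> push_cast <;> omega
  intro j
  rcases eq_or_ne j b with rfl | hjb
  · simpa only [coface_self, coface_of_ne hab.symm] using Or.inr (hsides (e j) t)
  rcases eq_or_ne j a with rfl | hja
  · simpa only [coface_of_ne hjb, coface_self] using Or.inr (hsides (e j) s)
  · simp [coface_of_ne hjb, coface_of_ne hja]

lemma isHub_of_mem_iff_mul_eq (hab : a ≠ b) (he : evenCoords e = {a, b}) (u : ℤˣ)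
    (hu : ∀ s t, coface (coface e a s) b t ∈ D ↔ s * t = u) : IsHub D e := by
  have hd : cdim e + 2 = n := by
    simpa [he, Finset.card_pair hab] using cdim_add_card_evenCoords e
  refine ⟨by omega, coface (coface e a 1) b u, coface (coface e a (-1)) b (-u), fun h => ?_, ?_,
    interCell_coface_coface_neg hab e 1 u⟩
  · have hb := congrFun h b
    simp only [coface_self, coface_of_ne hab.symm, add_right_inj, Units.val_inj] at hb
    exact units_ne_neg_self u hb
  · ext v
    simp only [Set.mem_inter_iff, mem_block_iff_of_evenCoords_eq_pair hab he, Set.mem_insert_iff,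
      Set.mem_singleton_iff]
    constructor
    · rintro ⟨⟨s, t, rfl⟩, hv⟩
      obtain rfl := (hu s t).1 hv
      rcases Int.units_eq_one_or s with rfl | rfl <;> simp
    · rintro (rfl | rfl)
      exacts [⟨⟨_, _, rfl⟩, (hu _ _).2 (one_mul u)⟩, ⟨⟨_, _, rfl⟩, (hu _ _).2 (by simp)⟩]

end Blocks

/-- The vertices `(s, t)` of a square form a `4`-cycle; its edges are the pairs of vertices that
differ in one sign. -/
lemma ncard_color_changes_square (P : ℤˣ → ℤˣ → Prop) (hsome : ∃ s t, P s t)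
    (hnotall : ∃ s t, ¬ P s t) (halt : ∀ u, ¬ ∀ s t, P s t ↔ s * t = u) :
    {s | ¬ (P s 1 ↔ P s (-1))}.ncard + {t | ¬ (P 1 t ↔ P (-1) t)}.ncard = 2 := by
  classical
  have hbool : ∀ p : ℤˣ → ℤˣ → Bool, (∃ s t, p s t) → (∃ s t, ¬ p s t) →
      (∀ u, ¬ ∀ s t, p s t ↔ s * t = u) →
      (Finset.univ.filter fun s => ¬ (p s 1 ↔ p s (-1))).card +
        (Finset.univ.filter fun t => ¬ (p 1 t ↔ p (-1) t)).card = 2 := by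
    decide
  rw [← Finset.coe_filter_univ, ← Finset.coe_filter_univ, Set.ncard_coe_finset,
    Set.ncard_coe_finset]
  simpa only [decide_eq_true_eq] using hbool (fun s t => decide (P s t))
    (by simpa only [decide_eq_true_eq]) (by simpa only [decide_eq_true_eq])
    (by simpa only [decide_eq_true_eq])

theorem bcount_of_nub_general (n : ℕ) (hn : 2 ≤ n) (D : Set (Fin n → ℤ))
    (hvox : ∀ v ∈ D, IsVoxel v) (e : Fin n → ℤ) (he : e ∈ FreeCells D (n - 2))
    (hnothub : ¬ IsHub D e) :
    bcount e D (n - 1) = 2 := by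
  have hd : cdim e = n - 2 := he.1.1
  have hcard : (evenCoords e).card = 2 := by
    have := cdim_add_card_evenCoords e
    omega
  obtain ⟨a, b, hab, heven⟩ := Finset.card_eq_two.1 hcard
  rw [← hd, mem_freeCells_cdim_iff hvox (by omega)] at he
  simp only [mem_block_iff_of_evenCoords_eq_pair hab heven] at he
  obtain ⟨⟨_, ⟨s, t, rfl⟩, hin⟩, ⟨_, ⟨s', t', rfl⟩, hout⟩⟩ := he
  rw [show n - 1 = cdim e + 1 by omega, bcount_of_evenCoords_eq_pair hvox hab heven]
  exact ncard_color_changes_square (fun s t => coface (coface e a s) b t ∈ D)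
    ⟨s, t, hin⟩ ⟨s', t', hout⟩ fun u hu => hnothub (isHub_of_mem_iff_mul_eq hab heven u hu)

/-- If `e` is a free `(n-2)`-cell of `D` that is not an `(n-2)`-hub
(an `(n-2)`-nub), then `b_{n-1}(e, D) = 2`. -/
theorem bcount_of_nub (n : ℕ) (hn : 2 ≤ n) (D : Set (Fin n → ℤ))
    (hfin : D.Finite) (hvox : ∀ v ∈ D, IsVoxel v)
    (e : Fin n → ℤ) (he : e ∈ FreeCells D (n - 2)) (hnothub : ¬ IsHub D e) :
    bcount e D (n - 1) = 2 :=
  bcount_of_nub_general n hn D hvox e he hnothub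

end DigitalGeometry
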